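/- Let X be a Gaussian random variable with distribution N(0, σ²) where σ > 0. Then for every real number x ≥ 0, Pr[X ≥ x] ≥ exp(−x²/(2σ²)) · 1/(√(2π)·(x/σ) + 2). -/

import Mathlib

open MeasureTheory ProbabilityTheory Real

/-- The auxiliary difference function. -/
noncomputable def auxD (t : ℝ) : ℝ :=
  √(2 * π) / 2 - (∫ s in (0:ℝ)..t, Real.exp (-(1/2) * s ^ 2))
    - Real.exp (-(1/2) * t ^ 2) * (√(2 * π) / (√(2 * π) * t + 2))

lemma auxD_deriv (t : ℝ) (ht : 0 ≤ t) :
    HasDerivAt auxD (Real.exp (-(1/2) * t ^ 2) *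
      ((2 * π - 4 - 2 * √(2 * π) * t) / (√(2 * π) * t + 2) ^ 2)) t := by
  have hc : 0 < √(2 * π) := by positivity
  have hc2 : √(2 * π) ^ 2 = 2 * π := Real.sq_sqrt (by positivity)
  have hcont : Continuous (fun s : ℝ => Real.exp (-(1/2) * s ^ 2)) := by fun_prop
  have h1 : HasDerivAt (fun u : ℝ => ∫ s in (0:ℝ)..u, Real.exp (-(1/2) * s ^ 2))
      (Real.exp (-(1/2) * t ^ 2)) t :=
    hcont.integral_hasStrictDerivAt 0 t |>.hasDerivAt
  have hne : √(2 * π) * t + 2 ≠ 0 := by positivity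
  have h2 : HasDerivAt (fun u : ℝ => Real.exp (-(1/2) * u ^ 2))
      (Real.exp (-(1/2) * t ^ 2) * (-(1/2) * (2 * t))) t := by
    have := ((hasDerivAt_pow 2 t).const_mul (-(1/2) : ℝ)).exp
    simpa using this
  have h3 : HasDerivAt (fun u : ℝ => √(2 * π) * u + 2) (√(2 * π)) t := by
    simpa using ((hasDerivAt_id t).const_mul (√(2 * π))).add_const 2
  have h4 := (h1.const_sub (√(2 * π) / 2)).sub
    (h2.mul ((hasDerivAt_const t (√(2 * π))).div h3 hne))
  refine h4.congr_deriv ?_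
  have e : 2 * π - 4 - 2 * √(2 * π) * t = √(2 * π) ^ 2 - 4 - 2 * √(2 * π) * t := by rw [hc2]
  rw [e]
  simp only [Pi.div_apply]
  field_simp
  ring

lemma auxD_nonneg (t : ℝ) (ht : 0 ≤ t) : 0 ≤ auxD t := by
  have hc : 0 < √(2 * π) := by positivity
  have hpi := Real.pi_gt_three
  have hcont : ContinuousOn auxD (Set.Ici 0) := fun s hs =>
    (auxD_deriv s hs).continuousAt.continuousWithinAt
  set t0 : ℝ := (2 * π - 4) / (2 * √(2 * π)) with ht0
  have ht0p : 0 ≤ t0 := by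
    apply div_nonneg <;> [linarith; positivity]
  have hD0 : auxD 0 = 0 := by simp [auxD]
  rcases le_total t t0 with h | h
  · have hm : MonotoneOn auxD (Set.Icc 0 t0) := by
      apply monotoneOn_of_deriv_nonneg (convex_Icc _ _)
        (hcont.mono fun s hs => hs.1)
      · rw [interior_Icc]
        exact fun s hs => (auxD_deriv s hs.1.le).differentiableAt.differentiableWithinAt
      · rw [interior_Icc]
        intro s hs
        rw [(auxD_deriv s hs.1.le).deriv]
        have := (le_div_iff₀ (by positivity)).1 hs.2.le
        have : 0 ≤ 2 * π - 4 - 2 * √(2 * π) * s := by linarith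
        positivity
    have := hm ⟨le_rfl, ht0p⟩ ⟨ht, h⟩ ht
    rwa [hD0] at this
  · have hm : AntitoneOn auxD (Set.Ici t0) := by
      apply antitoneOn_of_deriv_nonpos (convex_Ici _)
        (hcont.mono fun s hs => ht0p.trans hs)
      · rw [interior_Ici]
        exact fun s hs => (auxD_deriv s (ht0p.trans (le_of_lt hs))).differentiableAt.differentiableWithinAt
      · rw [interior_Ici]
        intro s hs
        rw [(auxD_deriv s (ht0p.trans (le_of_lt hs))).deriv]
        have hs2 : t0 ≤ s := le_of_lt hs
        have := (div_le_iff₀ (by positivity)).1 hs2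
        have : 2 * π - 4 - 2 * √(2 * π) * s ≤ 0 := by linarith
        exact mul_nonpos_of_nonneg_of_nonpos (by positivity)
          (div_nonpos_of_nonpos_of_nonneg this (by positivity))
    have hint : Integrable (fun s : ℝ => Real.exp (-(1/2) * s ^ 2)) :=
      integrable_exp_neg_mul_sq (by norm_num)
    have l1 := intervalIntegral_tendsto_integral_Ioi (0:ℝ) hint.integrableOn Filter.tendsto_id
    rw [integral_gaussian_Ioi] at l1
    have l2 : Filter.Tendsto (fun t : ℝ => √(2 * π) / (√(2 * π) * t + 2)) Filter.atTop (nhds 0) := by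
      apply Filter.Tendsto.const_div_atTop
      exact Filter.tendsto_atTop_add_const_right _ _ (Filter.tendsto_id.const_mul_atTop hc)
    have l3 : Filter.Tendsto (fun t : ℝ => Real.exp (-(1/2) * t ^ 2) * (√(2 * π) / (√(2 * π) * t + 2)))
        Filter.atTop (nhds 0) := by
      apply squeeze_zero' _ _ l2
      · filter_upwards [Filter.eventually_ge_atTop 0] with s hs
        positivity
      · filter_upwards [Filter.eventually_ge_atTop 0] with s hs
        apply mul_le_of_le_one_left (by positivity)
        rw [Real.exp_le_one_iff]
        nlinarith [sq_nonneg s]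
    have l4 : Filter.Tendsto auxD Filter.atTop (nhds 0) := by
      have := (l1.const_sub (√(2 * π) / 2)).sub l3
      have e : π / (1/2) = 2 * π := by ring
      rw [e] at this
      rw [sub_self, sub_zero] at this
      exact this
    apply le_of_tendsto l4
    filter_upwards [Filter.eventually_ge_atTop t] with s hs
    exact hm h (h.trans hs) hs

lemma std_tail (t : ℝ) (ht : 0 ≤ t) :
    Real.exp (-(1/2) * t ^ 2) * (1 / (√(2 * π) * t + 2)) ≤
      (gaussianReal 0 1 (Set.Ici t)).toReal := by
  have hc : 0 < √(2 * π) := by positivity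
  have hint : Integrable (fun s : ℝ => Real.exp (-(1/2) * s ^ 2)) :=
    integrable_exp_neg_mul_sq (by norm_num)
  rw [gaussianReal_apply_eq_integral 0 one_ne_zero, ENNReal.toReal_ofReal
    (integral_nonneg fun _ => gaussianPDFReal_nonneg _ _ _), integral_Ici_eq_integral_Ioi]
  have e : ∀ s, gaussianPDFReal 0 1 s = (√(2 * π))⁻¹ * Real.exp (-(1/2) * s ^ 2) := by
    intro s
    simp only [gaussianPDFReal, NNReal.coe_one, mul_one, sub_zero]
    congr 2
    ring
  simp_rw [e]
  rw [integral_const_mul]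
  have hs := intervalIntegral.integral_interval_add_Ioi (a := (0:ℝ)) (b := t)
    hint.integrableOn hint.integrableOn
  have e2 : π / (1/2) = 2 * π := by ring
  rw [integral_gaussian_Ioi, e2] at hs
  have hD := auxD_nonneg t ht
  unfold auxD at hD
  have : Real.exp (-(1/2) * t ^ 2) * (√(2 * π) / (√(2 * π) * t + 2)) ≤
    ∫ s in Set.Ioi t, Real.exp (-(1/2) * s ^ 2) := by linarith
  calc _ = (√(2 * π))⁻¹ * (Real.exp (-(1/2) * t ^ 2) * (√(2 * π) / (√(2 * π) * t + 2))) := by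
        field_simp
    _ ≤ _ := by gcongr

/-- Lower bound on the Gaussian tail: if `X ~ N(0, σ²)` with `σ > 0`, then for
every `x ≥ 0`, `Pr[X ≥ x] ≥ exp(−x²/(2σ²)) · 1/(√(2π)·(x/σ) + 2)`. -/
theorem gaussian_tail_lower_bound {Ω : Type*} [MeasurableSpace Ω]
    (μ : Measure Ω) [IsProbabilityMeasure μ]
    (σ : ℝ) (hσ : 0 < σ) (X : Ω → ℝ) (hX : Measurable X)
    (hlaw : μ.map X = gaussianReal 0 ⟨σ ^ 2, sq_nonneg σ⟩)
    (x : ℝ) (hx : 0 ≤ x) :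
    (μ {ω | x ≤ X ω}).toReal ≥
      Real.exp (-x ^ 2 / (2 * σ ^ 2)) * (1 / (Real.sqrt (2 * π) * (x / σ) + 2)) := by
  have h := std_tail (x / σ) (by positivity)
  have hm := gaussianReal_map_const_mul (μ := 0) (v := 1) σ
  rw [mul_zero, mul_one] at hm
  have e : μ {ω | x ≤ X ω} = gaussianReal 0 1 (Set.Ici (x / σ)) := by
    have : {ω | x ≤ X ω} = X ⁻¹' Set.Ici x := rfl
    rw [this, ← Measure.map_apply hX measurableSet_Ici, hlaw]
    refine (congrArg (fun m : Measure ℝ => m (Set.Ici x)) hm.symm).trans ?_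
    rw [Measure.map_apply (by fun_prop) measurableSet_Ici]
    congr 1
    ext s
    simp [div_le_iff₀ hσ, mul_comm]
  rw [e]
  have e3 : -x ^ 2 / (2 * σ ^ 2) = -(1/2) * (x / σ) ^ 2 := by field_simp
  rw [e3]
  exact h
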